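/- arXiv:2201.12884 — 8 statements merged into one kernel-verified Lean document; each statement's English description precedes it below -/
import Mathlib

section
/- Let ℓ ≥ 3 and let m be an integer with 0 ≤ m ≤ ℓ − 1. Then there exists a bijection σ from the m-element subsets of the vertex set of the cycle graph C_{2ℓ} to the m-element subsets of the vertex set of the disjoint union C_ℓ ⊔ C_ℓ such that for every m-element subset S of the vertices of C_{2ℓ}, the subgraph of C_{2ℓ} induced on S is isomorphic to the subgraph of C_ℓ ⊔ C_ℓ induced on σ(S). -/
/-- The cycle graph on vertex set `ZMod n`: `i` and `j` are adjacent iff `i - j = ±1`. -/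
def cycle (n : ℕ) : SimpleGraph (ZMod n) :=
  SimpleGraph.fromRel (fun i j => i - j = 1)

theorem aux_sub (n a b : ℕ) : ((a : ZMod n) - (b : ZMod n) = 1) ↔ a % n = (b + 1) % n := by
  rw [sub_eq_iff_eq_add, add_comm]
  have := ZMod.natCast_eq_natCast_iff' a (b + 1) n
  push_cast at this
  exact this

theorem aux_mod (ℓ a b : ℕ) (ha : a < 2 * ℓ) (hb : b ≤ 2 * ℓ) :
    a % ℓ = b % ℓ ↔ (a = b ∨ a + ℓ = b ∨ a = b + ℓ ∨ a + 2 * ℓ = b) := by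
  have key : ∀ c, c ≤ 2 * ℓ → (c < ℓ ∧ c % ℓ = c) ∨ (ℓ ≤ c ∧ c < 2 * ℓ ∧ c % ℓ = c - ℓ) ∨
      (c = 2 * ℓ ∧ c % ℓ = 0) := by
    intro c hc
    rcases lt_or_ge c ℓ with h | h
    · exact Or.inl ⟨h, Nat.mod_eq_of_lt h⟩
    · rcases lt_or_ge c (2 * ℓ) with h2 | h2
      · refine Or.inr (Or.inl ⟨h, h2, ?_⟩)
        rw [Nat.mod_eq_sub_mod h, Nat.mod_eq_of_lt (by omega)]
      · have : c = 2 * ℓ := by omega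
        subst this
        simp
  have h1 := key a ha.le
  have h2 := key b hb
  omega

/-- Fibre-preserving map, cut at `i`. -/
def auxF (ℓ : ℕ) (i : ZMod ℓ) (x : ZMod (2 * ℓ)) : ZMod ℓ ⊕ ZMod ℓ :=
  if i.val < x.val ∧ x.val ≤ i.val + ℓ then Sum.inr ((x.val : ℕ) : ZMod ℓ)
  else Sum.inl ((x.val : ℕ) : ZMod ℓ)

theorem auxF_inj (ℓ : ℕ) (hℓ : 3 ≤ ℓ) (i : ZMod ℓ) : Function.Injective (auxF ℓ i) := by
  have : NeZero ℓ := ⟨by omega⟩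
  have : NeZero (2 * ℓ) := ⟨by omega⟩
  intro x y h
  have hx := ZMod.val_lt x
  have hy := ZMod.val_lt y
  have hi := ZMod.val_lt i
  apply ZMod.val_injective
  unfold auxF at h
  split_ifs at h with h1 h2 h2 <;>
  · simp only [Sum.inl.injEq, Sum.inr.injEq, reduceCtorEq] at h
    try rw [ZMod.natCast_eq_natCast_iff', aux_mod _ _ _ hx hy.le] at h
    try omega

theorem auxF_adj (ℓ : ℕ) (hℓ : 3 ≤ ℓ) (i : ZMod ℓ) (x y : ZMod (2 * ℓ))
    (hxi : ((x.val : ℕ) : ZMod ℓ) ≠ i) (hyi : ((y.val : ℕ) : ZMod ℓ) ≠ i) :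
    (cycle ℓ ⊕g cycle ℓ).Adj (auxF ℓ i x) (auxF ℓ i y) ↔ (cycle (2 * ℓ)).Adj x y := by
  have : NeZero ℓ := ⟨by omega⟩
  have : NeZero (2 * ℓ) := ⟨by omega⟩
  have hx := ZMod.val_lt x
  have hy := ZMod.val_lt y
  have hi := ZMod.val_lt i
  have e1 : ∀ u v : ZMod (2 * ℓ), u - v = 1 ↔
      (u.val = v.val + 1 ∨ (u.val = 0 ∧ v.val + 1 = 2 * ℓ)) := by
    intro u v
    have hu := ZMod.val_lt u
    have hv := ZMod.val_lt v
    have := aux_sub (2 * ℓ) u.val v.val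
    rw [ZMod.natCast_zmod_val, ZMod.natCast_zmod_val, aux_mod _ _ _ (by omega) (by omega)] at this
    rw [this]
    omega
  have e2 : x = y ↔ x.val = y.val := (ZMod.val_injective _).eq_iff.symm
  rw [← ZMod.natCast_zmod_val i, Ne, ZMod.natCast_eq_natCast_iff',
    aux_mod _ _ _ hx (by omega)] at hxi
  rw [← ZMod.natCast_zmod_val i, Ne, ZMod.natCast_eq_natCast_iff',
    aux_mod _ _ _ hy (by omega)] at hyi
  have e3 := aux_sub ℓ x.val y.val
  have e4 := aux_sub ℓ y.val x.val
  have e5 := ZMod.natCast_eq_natCast_iff' x.val y.val ℓ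
  rw [aux_mod _ _ _ (by omega) (by omega)] at e3 e4 e5
  unfold auxF
  split_ifs with h1 h2 h2 <;>
  · simp only [cycle, SimpleGraph.sum_adj, SimpleGraph.fromRel_adj, ne_eq, e1, e2, e3, e4, e5]
    first | omega | (rw [false_iff]; omega)

theorem aux_abs {V W B : Type*} [Fintype B] [DecidableEq B] (m : ℕ)
    (G : SimpleGraph V) (H : SimpleGraph W) (π : V → B) (p : W → B) (φ : B → V ≃ W)
    (hp : ∀ b v, p (φ b v) = π v) (hm : m < Fintype.card B)
    (hadj : ∀ b x y, π x ≠ b → π y ≠ b → (H.Adj (φ b x) (φ b y) ↔ G.Adj x y)) :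
    ∃ σ : {S : Finset V // S.card = m} ≃ {S : Finset W // S.card = m},
      ∀ S : {S : Finset V // S.card = m},
        Nonempty ((G.induce (S.1 : Set V)) ≃g (H.induce ((σ S).1 : Set W))) := by
  classical
  have hc : ∀ T : Finset B, ∃ b, T.card ≤ m → b ∉ T := by
    intro T
    by_cases h : T.card ≤ m
    · obtain ⟨b, hb⟩ : ∃ b, b ∉ T := by
        by_contra hcon
        push Not at hcon
        have : T = Finset.univ := Finset.eq_univ_iff_forall.2 hcon
        rw [this, Finset.card_univ] at h
        omega
      exact ⟨b, fun _ => hb⟩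
    · have : 0 < Fintype.card B := by omega
      obtain ⟨b⟩ := Fintype.card_pos_iff.1 this
      exact ⟨b, fun h' => absurd h' h⟩
  choose c hc using hc
  have hp' : ∀ b w, π ((φ b).symm w) = p w := by
    intro b w
    rw [← hp b, Equiv.apply_symm_apply]
  have i1 : ∀ b (S : Finset V), (S.map (φ b).toEmbedding).image p = S.image π := by
    intro b S
    rw [Finset.map_eq_image, Finset.image_image]
    exact Finset.image_congr (fun v _ => hp b v)
  have i2 : ∀ b (T : Finset W), (T.map (φ b).symm.toEmbedding).image π = T.image p := by
    intro b T
    rw [Finset.map_eq_image, Finset.image_image]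
    exact Finset.image_congr (fun v _ => hp' b v)
  refine ⟨⟨fun S => ⟨S.1.map (φ (c (S.1.image π))).toEmbedding, by simp [S.2]⟩,
    fun T => ⟨T.1.map (φ (c (T.1.image p))).symm.toEmbedding, by simp [T.2]⟩, ?_, ?_⟩, ?_⟩
  · intro S
    apply Subtype.ext
    simp only [i1]
    ext v
    simp
  · intro T
    apply Subtype.ext
    simp only [i2]
    ext v
    simp
  · intro S
    set b := c (S.1.image π) with hb
    have hbS : ∀ x ∈ S.1, π x ≠ b := by
      intro x hx h
      refine hc (S.1.image π) (Finset.card_image_le.trans S.2.le) ?_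
      rw [← hb, ← h]
      exact Finset.mem_image_of_mem _ hx
    refine ⟨⟨(φ b).subtypeEquiv (fun a => ?_), ?_⟩⟩
    · simp [← hb]
    · intro x y
      exact hadj b x.1 y.1 (hbS _ x.2) (hbS _ y.2)

/-- For `ℓ ≥ 3` and `0 ≤ m ≤ ℓ - 1`, there is a bijection `σ` from the `m`-element subsets of
the vertices of `C_{2ℓ}` to the `m`-element subsets of the vertices of `C_ℓ ⊔ C_ℓ` such that
the subgraph induced on `S` is isomorphic to the subgraph induced on `σ S`. -/
theorem stmt0 (ℓ m : ℕ) (hℓ : 3 ≤ ℓ) (hm : m ≤ ℓ - 1) :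
    ∃ σ : {S : Finset (ZMod (2 * ℓ)) // S.card = m} ≃
          {S : Finset (ZMod ℓ ⊕ ZMod ℓ) // S.card = m},
      ∀ S : {S : Finset (ZMod (2 * ℓ)) // S.card = m},
        Nonempty (((cycle (2 * ℓ)).induce (S.1 : Set (ZMod (2 * ℓ)))) ≃g
          ((cycle ℓ ⊕g cycle ℓ).induce ((σ S).1 : Set (ZMod ℓ ⊕ ZMod ℓ)))) := by
  have : NeZero ℓ := ⟨by omega⟩
  have : NeZero (2 * ℓ) := ⟨by omega⟩
  have hbij : ∀ i, Function.Bijective (auxF ℓ i) := fun i => by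
    rw [Fintype.bijective_iff_injective_and_card]
    refine ⟨auxF_inj ℓ hℓ i, ?_⟩
    simp only [Fintype.card_sum, ZMod.card]
    omega
  refine aux_abs m _ _ (fun x => ((x.val : ℕ) : ZMod ℓ)) (Sum.elim id id)
    (fun i => Equiv.ofBijective _ (hbij i)) ?_ ?_ ?_
  · intro i x
    simp only [Equiv.ofBijective_apply, auxF]
    split_ifs <;> rfl
  · rw [ZMod.card]; omega
  · intro i x y hx hy
    exact auxF_adj ℓ hℓ i x y hx hy
end

section
/- Let ℓ ≥ 3 and let m be an integer with 1 ≤ m ≤ ℓ. Let G₁ be the cone over C_ℓ ⊔ C_ℓ with apex u₁, and let G₂ be the cone over C_{2ℓ} with apex u₂. Then there exists a bijection σ from the m-element subsets of the vertices of G₁ that contain u₁ to the m-element subsets of the vertices of G₂ that contain u₂, such that for every such subset S, the subgraph of G₁ induced on S is isomorphic to the subgraph of G₂ induced on σ(S) via an isomorphism sending u₁ to u₂. -/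
/-- The cone over a graph `G`: a new apex vertex `none` adjacent to every vertex of `G`. -/
def cone {α : Type*} (G : SimpleGraph α) : SimpleGraph (Option α) where
  Adj x y := match x, y with
    | none, none => False
    | none, some _ => True
    | some _, none => True
    | some a, some b => G.Adj a b
  symm := by constructor; rintro (_|a) (_|b) h <;> simp_all <;> exact h.symm
  loopless := by constructor; rintro (_|a) h <;> simp_all

theorem cyc_adj (n : ℕ) (hn : 2 ≤ n) (a b : ZMod n) : (cycle n).Adj a b ↔
    (a.val = b.val + 1 ∨ (a.val = 0 ∧ b.val + 1 = n)) ∨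
    (b.val = a.val + 1 ∨ (b.val = 0 ∧ a.val + 1 = n)) := by
  have : NeZero n := ⟨by omega⟩
  have : Fact (1 < n) := ⟨by omega⟩
  have key : ∀ a b : ZMod n, a - b = 1 ↔ (a.val = b.val + 1 ∨ (a.val = 0 ∧ b.val + 1 = n)) := by
    intro a b
    have ha := ZMod.val_lt a
    have hb := ZMod.val_lt b
    rw [sub_eq_iff_eq_add, ← (ZMod.val_injective n).eq_iff, ZMod.val_add, ZMod.val_one]
    by_cases h : b.val + 1 = n
    · rw [add_comm 1, h, Nat.mod_self]; omega
    · rw [Nat.mod_eq_of_lt (by omega)]; omega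
  have hab : a = b ↔ a.val = b.val := (ZMod.val_injective n).eq_iff.symm
  have ha := ZMod.val_lt a
  have hb := ZMod.val_lt b
  simp only [cycle, SimpleGraph.fromRel_adj, key, ne_eq, hab]
  omega

def pr1 (ℓ : ℕ) : ZMod ℓ ⊕ ZMod ℓ → ℕ := Sum.elim ZMod.val ZMod.val

def pr2 (ℓ : ℕ) (x : ZMod (2 * ℓ)) : ℕ := x.val % ℓ

def phiVal (ℓ i : ℕ) : ZMod ℓ ⊕ ZMod ℓ → ℕ :=
  Sum.elim (fun j => if i < j.val then j.val + ℓ else j.val)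
    (fun j => if i < j.val then j.val else j.val + ℓ)

theorem phiVal_lt (ℓ i : ℕ) (h : 0 < ℓ) (x) : phiVal ℓ i x < 2 * ℓ := by
  have : NeZero ℓ := ⟨by omega⟩
  rcases x with j | j <;> have := ZMod.val_lt j <;> simp only [phiVal, Sum.elim_inl, Sum.elim_inr] <;>
    split_ifs <;> omega

theorem phiVal_mod (ℓ i : ℕ) (h : 0 < ℓ) (x) : phiVal ℓ i x % ℓ = pr1 ℓ x := by
  have : NeZero ℓ := ⟨by omega⟩
  rcases x with j | j <;> have := ZMod.val_lt j <;>
    simp only [phiVal, pr1, Sum.elim_inl, Sum.elim_inr] <;>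
    split_ifs <;> simp [Nat.mod_eq_of_lt this]

theorem phiVal_inj (ℓ i : ℕ) (h : 0 < ℓ) : Function.Injective (phiVal ℓ i) := by
  have : NeZero ℓ := ⟨by omega⟩
  rintro (a | a) (b | b) hab <;> have := ZMod.val_lt a <;> have := ZMod.val_lt b <;>
    simp only [phiVal, Sum.elim_inl, Sum.elim_inr] at hab
  · congr 1; apply ZMod.val_injective; split_ifs at hab <;> omega
  · exfalso; split_ifs at hab <;> omega
  · exfalso; split_ifs at hab <;> omega
  · congr 1; apply ZMod.val_injective; split_ifs at hab <;> omega

theorem exists_phi (ℓ i : ℕ) (h : 0 < ℓ) :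
    ∃ e : (ZMod ℓ ⊕ ZMod ℓ) ≃ ZMod (2 * ℓ), ∀ x, (e x).val = phiVal ℓ i x := by
  have : NeZero ℓ := ⟨by omega⟩
  have : NeZero (2 * ℓ) := ⟨by omega⟩
  have hv : ∀ x, ((phiVal ℓ i x : ℕ) : ZMod (2 * ℓ)).val = phiVal ℓ i x :=
    fun x => ZMod.val_cast_of_lt (phiVal_lt ℓ i h x)
  refine ⟨Equiv.ofBijective (fun x => ((phiVal ℓ i x : ℕ) : ZMod (2 * ℓ))) ?_, hv⟩
  rw [Fintype.bijective_iff_injective_and_card]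
  refine ⟨fun x y hxy => phiVal_inj ℓ i h ?_, ?_⟩
  · rw [← hv x, ← hv y]; exact congrArg ZMod.val hxy
  · simp [ZMod.card]; omega

theorem phi_adj (ℓ i : ℕ) (h : 3 ≤ ℓ) (hi : i < ℓ) (e : (ZMod ℓ ⊕ ZMod ℓ) ≃ ZMod (2 * ℓ))
    (he : ∀ x, (e x).val = phiVal ℓ i x) (x y) (hx : pr1 ℓ x ≠ i) (hy : pr1 ℓ y ≠ i) :
    (cycle (2 * ℓ)).Adj (e x) (e y) ↔ (cycle ℓ ⊕g cycle ℓ).Adj x y := by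
  have : NeZero ℓ := ⟨by omega⟩
  rw [cyc_adj _ (by omega), he, he]
  rcases x with a | a <;> rcases y with b | b <;> have := ZMod.val_lt a <;>
    have := ZMod.val_lt b <;>
    simp only [phiVal, pr1, Sum.elim_inl, Sum.elim_inr] at hx hy ⊢ <;>
    simp only [SimpleGraph.sum_adj, cyc_adj ℓ (by omega : 2 ≤ ℓ)]
  · split_ifs <;> omega
  · simp only [Bool.false_eq_true, iff_false]
    split_ifs <;> omega
  · simp only [Bool.false_eq_true, iff_false]
    split_ifs <;> omega
  · split_ifs <;> omega

/-- The first fibre missed by the set. -/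
noncomputable def gap {α : Type*} (p : α → ℕ) (S : Finset (Option α)) : ℕ :=
  sInf {i | ∀ v, some v ∈ S → p v ≠ i}

theorem gap_lt {α : Type*} (p : α → ℕ) (S : Finset (Option α)) (ℓ : ℕ) (h0 : none ∈ S)
    (hS : S.card ≤ ℓ) : gap p S < ℓ := by
  classical
  by_contra hlt
  have hsub : Finset.range ℓ ⊆ (S.erase none).image (fun o => o.elim 0 p) := by
    intro j hj
    have hj' : j < gap p S := by have := Finset.mem_range.1 hj; omega
    have := Nat.notMem_of_lt_sInf hj'
    simp only [Set.mem_ofPred_eq, not_forall, not_not] at this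
    obtain ⟨v, hv, hvj⟩ := this
    exact Finset.mem_image.2 ⟨some v, by simp [hv], hvj⟩
  have h1 := (Finset.card_le_card hsub).trans Finset.card_image_le
  rw [Finset.card_range, Finset.card_erase_of_mem h0] at h1
  have := Finset.card_pos.2 ⟨_, h0⟩
  omega

theorem gap_spec {α : Type*} (p : α → ℕ) (S : Finset (Option α)) (v : α) (hv : some v ∈ S) :
    p v ≠ gap p S := by
  classical
  have hne : {i | ∀ v, some v ∈ S → p v ≠ i}.Nonempty := by
    obtain ⟨i, hi⟩ := Infinite.exists_notMem_finset (S.image (fun o => o.elim 0 p))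
    exact ⟨i, fun v hv e => hi (Finset.mem_image.2 ⟨some v, hv, e⟩)⟩
  exact Nat.sInf_mem hne v hv

theorem gap_map {α β : Type*} (p : α → ℕ) (q : β → ℕ) (e : α ≃ β) (h : ∀ x, q (e x) = p x)
    (S : Finset (Option α)) : gap q (S.map e.optionCongr.toEmbedding) = gap p S := by
  unfold gap
  congr 1
  ext i
  constructor
  · intro H v hv
    rw [← h]
    exact H _ (Finset.mem_map.2 ⟨some v, hv, rfl⟩)
  · intro H w hw
    obtain ⟨o, ho, how⟩ := Finset.mem_map.1 hw
    rcases o with _ | v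
    · simp at how
    · simp at how
      rw [← how, h]
      exact H v ho

/-- For `ℓ ≥ 3` and `1 ≤ m ≤ ℓ`, there is a bijection `σ` from the `m`-element subsets of the
cone over `C_ℓ ⊔ C_ℓ` containing the apex to the `m`-element subsets of the cone over `C_{2ℓ}`
containing the apex, such that the induced subgraphs on `S` and `σ S` are isomorphic via an
isomorphism mapping apex to apex. -/
theorem stmt1 (ℓ m : ℕ) (hℓ : 3 ≤ ℓ) (hm1 : 1 ≤ m) (hm2 : m ≤ ℓ) :
    ∃ σ : {S : Finset (Option (ZMod ℓ ⊕ ZMod ℓ)) // S.card = m ∧ none ∈ S} ≃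
          {S : Finset (Option (ZMod (2 * ℓ))) // S.card = m ∧ none ∈ S},
      ∀ S : {S : Finset (Option (ZMod ℓ ⊕ ZMod ℓ)) // S.card = m ∧ none ∈ S},
        ∃ e : ((cone (cycle ℓ ⊕g cycle ℓ)).induce (S.1 : Set (Option (ZMod ℓ ⊕ ZMod ℓ)))) ≃g
              ((cone (cycle (2 * ℓ))).induce ((σ S).1 : Set (Option (ZMod (2 * ℓ))))),
          e ⟨none, S.2.2⟩ = ⟨none, (σ S).2.2⟩ := by
  choose φ hφ using fun i => exists_phi ℓ i (by omega)
  have hp : ∀ i x, pr2 ℓ (φ i x) = pr1 ℓ x := fun i x => by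
    rw [pr2, hφ, phiVal_mod ℓ i (by omega)]
  have hp' : ∀ i x, pr1 ℓ ((φ i).symm x) = pr2 ℓ x := fun i x => by
    rw [← hp i, Equiv.apply_symm_apply]
  refine ⟨
    { toFun := fun S => ⟨S.1.map (φ (gap (pr1 ℓ) S.1)).optionCongr.toEmbedding,
        by rw [Finset.card_map]; exact S.2.1, Finset.mem_map.2 ⟨none, S.2.2, rfl⟩⟩
      invFun := fun S => ⟨S.1.map (φ (gap (pr2 ℓ) S.1)).symm.optionCongr.toEmbedding,
        by rw [Finset.card_map]; exact S.2.1, Finset.mem_map.2 ⟨none, S.2.2, rfl⟩⟩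
      left_inv := ?_
      right_inv := ?_ }, ?_⟩
  · intro S
    apply Subtype.ext
    dsimp only
    rw [gap_map _ _ _ (hp _), Finset.map_map]
    convert Finset.map_refl
    ext1 o
    rcases o with _ | v <;> simp
  · intro S
    apply Subtype.ext
    dsimp only
    rw [gap_map _ _ _ (hp' _), Finset.map_map]
    convert Finset.map_refl
    ext1 o
    rcases o with _ | v <;> simp
  · rintro ⟨S, hS, h0⟩
    have hlt := gap_lt (pr1 ℓ) S ℓ h0 (by omega)
    have hsp := gap_spec (pr1 ℓ) S
    refine ⟨⟨(φ (gap (pr1 ℓ) S)).optionCongr.subtypeEquiv ?_, ?_⟩, ?_⟩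
    · intro o
      exact (Finset.mem_map' (φ (gap (pr1 ℓ) S)).optionCongr.toEmbedding).symm
    · rintro ⟨_ | v, hv⟩ ⟨_ | w, hw⟩
      · simp [cone]
      · simp [cone]
      · simp [cone]
      · exact phi_adj ℓ _ hℓ hlt _ (hφ _) v w (hsp v hv) (hsp w hw)
    · rfl
end

section
/- Let k ≥ 1 and ℓ ≥ 2k + 1. Then there exists a bijection σ from the k-element subsets of the vertex set of the cycle graph C_{2ℓ} to the k-element subsets of the vertex set of the disjoint union C_ℓ ⊔ C_ℓ such that for every k-element subset M there is a bijection τ : M → σ(M) with the following property: for all x, y ∈ M and each j ∈ {1, 2}, the graph distance between x and y in C_{2ℓ} equals j if and only if τ(x) and τ(y) are connected in C_ℓ ⊔ C_ℓ and their graph distance equals j. -/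
open Classical in
theorem dist_two_iff {V : Type*} (G : SimpleGraph V) (x y : V) :
    G.dist x y = 2 ↔ x ≠ y ∧ ¬ G.Adj x y ∧ ∃ z, G.Adj x z ∧ G.Adj z y := by
  constructor
  · intro h
    refine ⟨?_, ?_, ?_⟩
    · rintro rfl
      simp at h
    · intro h'
      rw [← SimpleGraph.dist_eq_one_iff_adj] at h'
      omega
    · have hr : G.Reachable x y := by
        by_contra hc
        rw [SimpleGraph.dist_eq_zero_of_not_reachable hc] at h
        omega
      obtain ⟨w, hw⟩ := hr.exists_walk_length_eq_dist
      rw [h] at hw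
      match w, hw with
      | .cons h1 (.cons h2 .nil), _ => exact ⟨_, h1, h2⟩
  · rintro ⟨hne, hna, z, h1, h2⟩
    have hle : G.dist x y ≤ 2 := SimpleGraph.dist_le (.cons h1 (.cons h2 .nil))
    have hr : G.Reachable x y := ⟨.cons h1 (.cons h2 .nil)⟩
    have h0 : G.dist x y ≠ 0 := fun h => hne (hr.dist_eq_zero_iff.1 h)
    have h1 : G.dist x y ≠ 1 := fun h => hna (SimpleGraph.dist_eq_one_iff_adj.1 h)
    omega

theorem cyc_adj_s3 {n : ℕ} (x y : ZMod n) :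
    (cycle n).Adj x y ↔ x ≠ y ∧ (x - y = 1 ∨ y - x = 1) := by
  simp [cycle]

theorem cyc_common {n : ℕ} (hn : 3 ≤ n) (x y : ZMod n) (hxy : x ≠ y) :
    (∃ z, (cycle n).Adj x z ∧ (cycle n).Adj z y) ↔ (x - y = 2 ∨ y - x = 2) := by
  have : Fact (1 < n) := ⟨by omega⟩
  have h1 : (1 : ZMod n) ≠ 0 := one_ne_zero
  simp only [cyc_adj_s3]
  constructor
  · rintro ⟨z, ⟨-, h | h⟩, ⟨-, h' | h'⟩⟩
    · left; linear_combination h + h'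
    · exact absurd (by linear_combination h - h') hxy
    · exact absurd (by linear_combination h' - h) hxy
    · right; linear_combination h + h'
  · rintro (h | h)
    · refine ⟨y + 1, ⟨?_, ?_⟩, ?_, ?_⟩
      · intro e; apply h1; linear_combination e - h
      · left; linear_combination h
      · simp
      · left; ring
    · refine ⟨x + 1, ⟨?_, ?_⟩, ?_, ?_⟩
      · simp
      · right; ring
      · intro e; apply h1; linear_combination -h - e
      · right; linear_combination h

abbrev prj (ℓ : ℕ) : ZMod (2 * ℓ) →+* ZMod ℓ := ZMod.castHom (Dvd.intro_left 2 rfl) (ZMod ℓ)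

def cutFun (ℓ : ℕ) (i x : ZMod (2 * ℓ)) : ZMod ℓ ⊕ ZMod ℓ :=
  if (x - i).val < ℓ then .inl (prj ℓ x) else .inr (prj ℓ x)

def fold (ℓ : ℕ) : ZMod ℓ ⊕ ZMod ℓ → ZMod ℓ := Sum.elim id id

theorem fold_cut (ℓ : ℕ) (i x) : fold ℓ (cutFun ℓ i x) = prj ℓ x := by
  unfold cutFun fold; split_ifs <;> rfl

theorem prj_eq {ℓ : ℕ} [NeZero ℓ] (a : ZMod (2 * ℓ)) : prj ℓ a = ((a.val : ℕ) : ZMod ℓ) := by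
  conv_lhs => rw [← ZMod.natCast_zmod_val a]
  simp

/-- same row plus equal shifted projections -/
theorem core {ℓ : ℕ} [NeZero ℓ] (a b : ZMod (2 * ℓ)) (c : ℕ) (hc : c ≤ 2)
    (h : c = 0 ∨ (prj ℓ a ≠ 0 ∧ prj ℓ b ≠ 0 ∧ prj ℓ b ≠ -1)) :
    a - b = c ↔ ((a.val < ℓ ↔ b.val < ℓ) ∧ prj ℓ a - prj ℓ b = c) := by
  have hl : 0 < ℓ := Nat.pos_of_ne_zero (NeZero.ne ℓ)
  have ha := ZMod.val_lt a
  have hb := ZMod.val_lt b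
  have e0 : ∀ d : ZMod (2 * ℓ), prj ℓ d ≠ 0 → d.val ≠ 0 ∧ d.val ≠ ℓ := by
    intro d hd
    rw [prj_eq] at hd
    constructor <;> intro e <;> rw [e] at hd <;> simp at hd
  have e1 : ∀ d : ZMod (2 * ℓ), prj ℓ d ≠ -1 → d.val + 1 ≠ ℓ ∧ d.val + 1 ≠ 2 * ℓ := by
    intro d hd
    rw [prj_eq] at hd
    constructor <;> intro e <;> apply hd <;> rw [eq_neg_iff_add_eq_zero] <;>
      have e' := congrArg (Nat.cast : ℕ → ZMod ℓ) e <;> push_cast at e' <;> simpa using e'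
  have h' : c = 0 ∨ ((a.val ≠ 0 ∧ a.val ≠ ℓ) ∧ (b.val ≠ 0 ∧ b.val ≠ ℓ) ∧
      (b.val + 1 ≠ ℓ ∧ b.val + 1 ≠ 2 * ℓ)) := by
    rcases h with h | ⟨h1, h2, h3⟩
    · exact .inl h
    · exact .inr ⟨e0 _ h1, e0 _ h2, e1 _ h3⟩
  have key1 : a - b = c ↔ ((2 * ℓ : ℕ) : ℤ) ∣ (a.val : ℤ) - b.val - c := by
    rw [← ZMod.intCast_zmod_eq_zero_iff_dvd]
    push_cast
    rw [ZMod.natCast_zmod_val, ZMod.natCast_zmod_val, sub_eq_zero]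
  have key2 : prj ℓ a - prj ℓ b = c ↔ (ℓ : ℤ) ∣ (a.val : ℤ) - b.val - c := by
    rw [← ZMod.intCast_zmod_eq_zero_iff_dvd, prj_eq, prj_eq]
    push_cast
    rw [sub_eq_zero]
  rw [key1, key2]
  generalize a.val = A at *
  generalize b.val = B at *
  constructor
  · rintro ⟨q, hq⟩
    have hq0 : (A : ℤ) - B - c = 0 ∨ (A : ℤ) - B - c = - (2 * ℓ) := by
      have q1 : q < 1 := by
        by_contra hh
        push Not at hh
        push_cast at hq
        nlinarith
      have q2 : -2 < q := by
        by_contra hh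
        push Not at hh
        push_cast at hq
        have : (A : ℤ) - B - c ≤ -(4 * ℓ) := by nlinarith
        omega
      have : q = 0 ∨ q = -1 := by omega
      rcases this with rfl | rfl
      · left; simpa using hq
      · right; rw [hq]; push_cast; ring
    refine ⟨by omega, ⟨2 * q, by rw [hq]; push_cast; ring⟩⟩
  · rintro ⟨hr, q, hq⟩
    have : q = 0 := by
      have q1 : q < 1 := by
        by_contra hh
        push Not at hh
        have : (ℓ : ℤ) ≤ ℓ * q := by nlinarith
        omega
      have q2 : -1 < q := by
        by_contra hh
        push Not at hh
        have : (ℓ : ℤ) * q ≤ -ℓ := by nlinarith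
        omega
      omega
    subst this
    rw [hq]; simp

theorem cut_inj (ℓ : ℕ) [NeZero ℓ] (i : ZMod (2 * ℓ)) : Function.Injective (cutFun ℓ i) := by
  intro x y h
  have h1 : prj ℓ x = prj ℓ y := by rw [← fold_cut ℓ i x, h, fold_cut]
  have := (core (x - i) (y - i) 0 (by omega) (.inl rfl)).2 ⟨by
    unfold cutFun at h
    split_ifs at h with p q q <;> first | simp only [p, q] | exact absurd h (by simp), by
      rw [map_sub, map_sub, h1]; simp⟩
  simpa [sub_eq_zero] using this

noncomputable def cutEquiv (ℓ : ℕ) [NeZero ℓ] (i : ZMod (2 * ℓ)) :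
    ZMod (2 * ℓ) ≃ ZMod ℓ ⊕ ZMod ℓ :=
  Equiv.ofBijective (cutFun ℓ i) ((Fintype.bijective_iff_injective_and_card _).2
    ⟨cut_inj ℓ i, by simp [ZMod.card]; ring⟩)

theorem fold_cutEquiv (ℓ : ℕ) [NeZero ℓ] (i x) : fold ℓ (cutEquiv ℓ i x) = prj ℓ x :=
  fold_cut ℓ i x

theorem prj_symm (ℓ : ℕ) [NeZero ℓ] (i y) : prj ℓ ((cutEquiv ℓ i).symm y) = fold ℓ y := by
  rw [← fold_cutEquiv ℓ i, Equiv.apply_symm_apply]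

theorem exists_cut (k ℓ : ℕ) [NeZero ℓ] (hℓ : 2 * k + 1 ≤ ℓ) (A : Finset (ZMod ℓ)) :
    ∃ i : ZMod (2 * ℓ), A.card ≤ k → prj ℓ i ∉ A ∧ prj ℓ i - 1 ∉ A := by
  by_cases hA : A.card ≤ k
  · have : ∃ a, a ∉ A ∪ A.image (· + 1) := by
      by_contra hc
      push Not at hc
      have h1 : A ∪ A.image (· + 1) = Finset.univ := Finset.eq_univ_of_forall hc
      have h2 := Finset.card_union_le A (A.image (· + 1))
      have h3 : (A.image (· + 1)).card ≤ A.card := Finset.card_image_le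
      rw [h1, Finset.card_univ, ZMod.card] at h2
      omega
    obtain ⟨a, ha⟩ := this
    obtain ⟨i, rfl⟩ := ZMod.ringHom_surjective (prj ℓ) a
    refine ⟨i, fun _ => ⟨fun h => ha (Finset.mem_union_left _ h), fun h => ha ?_⟩⟩
    exact Finset.mem_union_right _ (Finset.mem_image.2 ⟨_, h, by ring⟩)
  · exact ⟨0, fun h => absurd h hA⟩

theorem sum_dist_two {n : ℕ} (hn : 3 ≤ n) (u v : ZMod n ⊕ ZMod n) :
    (cycle n ⊕g cycle n).dist u v = 2 ↔ u ≠ v ∧ ¬ (cycle n ⊕g cycle n).Adj u v ∧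
      (u.isLeft = v.isLeft ∧ (fold n u - fold n v = 2 ∨ fold n v - fold n u = 2)) := by
  rw [dist_two_iff]
  refine and_congr_right fun hne => and_congr_right fun _ => ?_
  rcases u with u | u <;> rcases v with v | v <;>
    simp only [Sum.exists, SimpleGraph.sum_adj] <;> simp [fold] <;>
    exact cyc_common hn u v (by simpa using hne)

theorem sum_adj' {n : ℕ} (u v : ZMod n ⊕ ZMod n) :
    (cycle n ⊕g cycle n).Adj u v ↔ u ≠ v ∧
      (u.isLeft = v.isLeft ∧ (fold n u - fold n v = 1 ∨ fold n v - fold n u = 1)) := by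
  rcases u with u | u <;> rcases v with v | v <;> simp [fold, cyc_adj_s3]

theorem local_iso {ℓ : ℕ} [NeZero ℓ] (hl : 3 ≤ ℓ) (i x y : ZMod (2 * ℓ))
    (hx : prj ℓ i ≠ prj ℓ x) (hx' : prj ℓ i - 1 ≠ prj ℓ x)
    (hy : prj ℓ i ≠ prj ℓ y) (hy' : prj ℓ i - 1 ≠ prj ℓ y) (j : ℕ) (hj : j ∈ ({1, 2} : Set ℕ)) :
    (cycle (2 * ℓ)).dist x y = j ↔
      ((cycle ℓ ⊕g cycle ℓ).Reachable (cutEquiv ℓ i x) (cutEquiv ℓ i y) ∧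
        (cycle ℓ ⊕g cycle ℓ).dist (cutEquiv ℓ i x) (cutEquiv ℓ i y) = j) := by
  have row : ∀ x, (cutEquiv ℓ i x).isLeft = decide ((x - i).val < ℓ) := by
    intro x
    change (cutFun ℓ i x).isLeft = _
    unfold cutFun
    split_ifs with h <;> simp [h]
  have main : ∀ x y : ZMod (2 * ℓ), prj ℓ i ≠ prj ℓ x → prj ℓ i ≠ prj ℓ y →
      prj ℓ i - 1 ≠ prj ℓ y → ∀ c : ℕ, c ≤ 2 → (x - y = c ↔
        ((cutEquiv ℓ i x).isLeft = (cutEquiv ℓ i y).isLeft ∧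
          fold ℓ (cutEquiv ℓ i x) - fold ℓ (cutEquiv ℓ i y) = c)) := by
    intro x y h1 h2 h3 c hc
    have := core (x - i) (y - i) c hc (.inr ⟨?_, ?_, ?_⟩)
    · rw [row, row, fold_cutEquiv, fold_cutEquiv, decide_eq_decide]
      rw [map_sub, map_sub, sub_sub_sub_cancel_right, sub_sub_sub_cancel_right] at this
      exact this
    · rw [map_sub]; intro e; exact h1 (by linear_combination -e)
    · rw [map_sub]; intro e; exact h2 (by linear_combination -e)
    · rw [map_sub]; intro e; exact h3 (by linear_combination -e)
  have m1 := main x y hx hy hy' 1 (by omega)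
  have m2 := main x y hx hy hy' 2 (by omega)
  have m3 := main y x hy hx hx' 1 (by omega)
  have m4 := main y x hy hx hx' 2 (by omega)
  push_cast at m1 m2 m3 m4
  have hne : x ≠ y ↔ cutEquiv ℓ i x ≠ cutEquiv ℓ i y := (cutEquiv ℓ i).injective.ne_iff.symm
  have hadj : (cycle (2 * ℓ)).Adj x y ↔
      (cycle ℓ ⊕g cycle ℓ).Adj (cutEquiv ℓ i x) (cutEquiv ℓ i y) := by
    rw [cyc_adj_s3, sum_adj', hne, m1, m3, eq_comm (a := (cutEquiv ℓ i y).isLeft)]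
    rw [← and_or_left]
  have hj0 : j ≠ 0 := by rcases hj with rfl | rfl <;> decide
  have hR : ∀ u v, (cycle ℓ ⊕g cycle ℓ).dist u v = j → (cycle ℓ ⊕g cycle ℓ).Reachable u v := by
    intro u v h
    by_contra hc
    exact hj0 (h ▸ SimpleGraph.dist_eq_zero_of_not_reachable hc)
  rw [and_iff_right_of_imp (hR _ _)]
  rcases hj with rfl | rfl
  · rw [SimpleGraph.dist_eq_one_iff_adj, SimpleGraph.dist_eq_one_iff_adj, hadj]
  · rw [sum_dist_two hl, dist_two_iff, hadj, ← hne]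
    refine and_congr_right fun h => and_congr_right fun _ => ?_
    rw [cyc_common (by omega) x y h, m2, m4, eq_comm (a := (cutEquiv ℓ i y).isLeft)]
    rw [← and_or_left]

/-- For `k ≥ 1` and `ℓ ≥ 2k + 1`, there is a bijection `σ` from the `k`-element subsets of the
vertices of `C_{2ℓ}` to the `k`-element subsets of the vertices of `C_ℓ ⊔ C_ℓ` such that for
every `k`-element subset `M` there is a bijection `τ : M → σ M` with: for all `x, y ∈ M` and
`j ∈ {1, 2}`, the distance of `x` and `y` in `C_{2ℓ}` equals `j` iff `τ x` and `τ y` are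
connected in `C_ℓ ⊔ C_ℓ` and their distance equals `j`. -/
theorem stmt3 (k ℓ : ℕ) (hk : 1 ≤ k) (hℓ : 2 * k + 1 ≤ ℓ) :
    ∃ σ : {S : Finset (ZMod (2 * ℓ)) // S.card = k} ≃
          {S : Finset (ZMod ℓ ⊕ ZMod ℓ) // S.card = k},
      ∀ M : {S : Finset (ZMod (2 * ℓ)) // S.card = k},
        ∃ τ : {x // x ∈ M.1} ≃ {y // y ∈ (σ M).1},
          ∀ x y : {x // x ∈ M.1}, ∀ j ∈ ({1, 2} : Set ℕ),
            ((cycle (2 * ℓ)).dist x.1 y.1 = j ↔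
              ((cycle ℓ ⊕g cycle ℓ).Reachable (τ x).1 (τ y).1 ∧
                (cycle ℓ ⊕g cycle ℓ).dist (τ x).1 (τ y).1 = j)) := by
  have hl : 3 ≤ ℓ := by omega
  have : NeZero ℓ := ⟨by omega⟩
  choose c hc using exists_cut k ℓ hℓ
  have im1 : ∀ (i : ZMod (2 * ℓ)) (S : Finset (ZMod (2 * ℓ))),
      (S.map (cutEquiv ℓ i).toEmbedding).image (fold ℓ) = S.image (prj ℓ) := by
    intro i S
    rw [Finset.map_eq_image, Finset.image_image]
    exact Finset.image_congr fun x _ => fold_cutEquiv ℓ i x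
  have im2 : ∀ (i : ZMod (2 * ℓ)) (S : Finset (ZMod ℓ ⊕ ZMod ℓ)),
      (S.map (cutEquiv ℓ i).symm.toEmbedding).image (prj ℓ) = S.image (fold ℓ) := by
    intro i S
    rw [Finset.map_eq_image, Finset.image_image]
    exact Finset.image_congr fun x _ => prj_symm ℓ i x
  refine ⟨{
    toFun := fun M => ⟨M.1.map (cutEquiv ℓ (c (M.1.image (prj ℓ)))).toEmbedding, by
      rw [Finset.card_map, M.2]⟩
    invFun := fun N => ⟨N.1.map (cutEquiv ℓ (c (N.1.image (fold ℓ)))).symm.toEmbedding, by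
      rw [Finset.card_map, N.2]⟩
    left_inv := ?_
    right_inv := ?_ }, ?_⟩
  · intro M
    apply Subtype.ext
    dsimp only
    rw [im1]
    ext x
    simp
  · intro N
    apply Subtype.ext
    dsimp only
    rw [im2]
    ext x
    simp
  · intro M
    have hM := hc (M.1.image (prj ℓ)) (Finset.card_image_le.trans M.2.le)
    have hM' : ∀ x ∈ M.1, prj ℓ (c (M.1.image (prj ℓ))) ≠ prj ℓ x ∧
        prj ℓ (c (M.1.image (prj ℓ))) - 1 ≠ prj ℓ x := fun x hx =>
      ⟨fun e => hM.1 (e ▸ Finset.mem_image_of_mem _ hx),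
        fun e => hM.2 (e ▸ Finset.mem_image_of_mem _ hx)⟩
    refine ⟨(cutEquiv ℓ (c (M.1.image (prj ℓ)))).subtypeEquiv (fun a => by simp), ?_⟩
    intro x y j hj
    exact local_iso hl _ x.1 y.1 (hM' _ x.2).1 (hM' _ x.2).2 (hM' _ y.2).1 (hM' _ y.2).2 j hj
end

section
/- For every ℓ ≥ 3, the cone over the disjoint union C_ℓ ⊔ C_ℓ is not isomorphic to the cone over the cycle graph C_{2ℓ}. -/
/-- For every `ℓ ≥ 3`, the cone over `C_ℓ ⊔ C_ℓ` is not isomorphic to the cone over `C_{2ℓ}`. -/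
theorem stmt4 (ℓ : ℕ) (hℓ : 3 ≤ ℓ) :
    IsEmpty ((cone (cycle ℓ ⊕g cycle ℓ)) ≃g (cone (cycle (2 * ℓ)))) := by
  constructor
  intro f
  haveI : NeZero (2 * ℓ) := ⟨by omega⟩
  have hz : ∀ k : ℕ, 0 < k → k < 6 → (k : ZMod (2 * ℓ)) ≠ 0 := by
    intro k hk hk6 h
    rw [ZMod.natCast_eq_zero_iff] at h
    have := Nat.le_of_dvd hk h
    omega
  have h1 := hz 1 (by norm_num) (by norm_num)
  have h2 := hz 2 (by norm_num) (by norm_num)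
  have h3 := hz 3 (by norm_num) (by norm_num)
  have h4 := hz 4 (by norm_num) (by norm_num)
  push_cast at h1 h2 h3 h4
  have hnone : f none = none := by
    rcases hfa : f none with _ | a
    · rfl
    · exfalso
      obtain ⟨y, hy⟩ := f.surjective (some (a + 3))
      rcases y with _ | y
      · rw [hfa] at hy
        have h := Option.some.inj hy
        exact h3 (by linear_combination -h)
      · have hadj : (cone (cycle ℓ ⊕g cycle ℓ)).Adj none (some y) := trivial
        have h := f.map_adj_iff.2 hadj
        rw [hfa, hy] at h
        have h' : (cycle (2 * ℓ)).Adj a (a + 3) := h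
        simp only [cycle, SimpleGraph.fromRel_adj] at h'
        rcases h'.2 with h | h
        · exact h4 (by linear_combination -h)
        · exact h2 (by linear_combination h)
  have step : ∀ x : ZMod (2 * ℓ), (∃ i, f (some (Sum.inl i)) = some x) →
      ∃ i, f (some (Sum.inl i)) = some (x + 1) := by
    rintro x ⟨i, hi⟩
    obtain ⟨y, hy⟩ := f.surjective (some (x + 1))
    have hadj' : (cycle (2 * ℓ)).Adj x (x + 1) := by
      simp only [cycle, SimpleGraph.fromRel_adj]
      refine ⟨fun h => h1 (by linear_combination -h), Or.inr (by ring)⟩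
    have hadj : (cone (cycle (2 * ℓ))).Adj (some x) (some (x + 1)) := hadj'
    rw [← hi, ← hy, f.map_adj_iff] at hadj
    rcases y with _ | y | y
    · rw [hnone] at hy
      cases hy
    · exact ⟨y, hy⟩
    · have h : (cycle ℓ ⊕g cycle ℓ).Adj (Sum.inl i) (Sum.inr y) := hadj
      simp at h
  have hne : ∀ z, ∃ x, f (some z) = some x := by
    intro z
    rcases h : f (some z) with _ | x
    · rw [← hnone] at h
      cases f.injective h
    · exact ⟨x, rfl⟩
  obtain ⟨x0, hx0⟩ := hne (Sum.inl 0)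
  obtain ⟨x1, hx1⟩ := hne (Sum.inr 0)
  have all : ∀ k : ℕ, ∃ i, f (some (Sum.inl i)) = some (x0 + k) := by
    intro k
    induction k with
    | zero => exact ⟨0, by simpa using hx0⟩
    | succ k ih =>
      have := step _ ih
      rwa [add_assoc, ← Nat.cast_succ] at this
  obtain ⟨i, hi⟩ := all (x1 - x0).val
  rw [ZMod.natCast_zmod_val, add_sub_cancel, ← hx1] at hi
  cases f.injective hi
end

section
/- The Rook's 4×4 graph and the Shrikhande graph are not isomorphic. -/
/-- The Rook's 4×4 graph `K₄ □ K₄`: vertices `Fin 4 × Fin 4`, with `(a,b)` adjacent to `(c,d)`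
iff (`a = c` and `b ≠ d`) or (`b = d` and `a ≠ c`). -/
def rook : SimpleGraph (Fin 4 × Fin 4) where
  Adj v w := (v.1 = w.1 ∧ v.2 ≠ w.2) ∨ (v.2 = w.2 ∧ v.1 ≠ w.1)
  symm := by
    constructor
    rintro v w (⟨h1, h2⟩ | ⟨h1, h2⟩)
    exacts [Or.inl ⟨h1.symm, h2.symm⟩, Or.inr ⟨h1.symm, h2.symm⟩]
  loopless := by constructor; rintro v (⟨_, h⟩ | ⟨_, h⟩) <;> exact h rfl

instance : DecidableRel rook.Adj := fun v w =>
  decidable_of_iff ((v.1 = w.1 ∧ v.2 ≠ w.2) ∨ (v.2 = w.2 ∧ v.1 ≠ w.1)) Iff.rfl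

/-- The adjacency relation of the Shrikhande graph: distinct `v, w : ZMod 4 × ZMod 4` are
adjacent iff `v - w ∈ {(1,0), (3,0), (0,1), (0,3), (1,1), (3,3)}`. -/
def shrikhandeRel (v w : ZMod 4 × ZMod 4) : Prop :=
  v ≠ w ∧ v - w ∈ ({(1, 0), (3, 0), (0, 1), (0, 3), (1, 1), (3, 3)} : Finset (ZMod 4 × ZMod 4))

instance : DecidableRel shrikhandeRel := fun v w => by unfold shrikhandeRel; infer_instance

/-- The Shrikhande graph on `ZMod 4 × ZMod 4`. -/
def shrikhande : SimpleGraph (ZMod 4 × ZMod 4) where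
  Adj := shrikhandeRel
  symm := ⟨fun v w h => (by decide : ∀ a b, shrikhandeRel a b → shrikhandeRel b a) v w h⟩
  loopless := ⟨fun v h => (by decide : ∀ a, ¬shrikhandeRel a a) v h⟩

instance : DecidableRel shrikhande.Adj := fun v w =>
  inferInstanceAs (Decidable (shrikhandeRel v w))

set_option maxRecDepth 100000 in
set_option maxHeartbeats 4000000 in
theorem shrikhande_no_K4 : ∀ a b, shrikhandeRel a b → ∀ c, shrikhandeRel a c → shrikhandeRel b c →
    ∀ d, shrikhandeRel a d → shrikhandeRel b d → ¬ shrikhandeRel c d := by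
  decide +kernel

/-- The Rook's 4×4 graph and the Shrikhande graph are not isomorphic. -/
theorem stmt7 : IsEmpty (rook ≃g shrikhande) := by
  refine ⟨fun e => ?_⟩
  have h : ∀ i j : Fin 4, i ≠ j → shrikhandeRel (e (0, i)) (e (0, j)) := fun i j hij =>
    e.map_rel_iff.mpr (Or.inl ⟨rfl, hij⟩)
  exact shrikhande_no_K4 _ _ (h 0 1 (by decide)) _ (h 0 2 (by decide)) (h 1 2 (by decide)) _
    (h 0 3 (by decide)) (h 1 3 (by decide)) (h 2 3 (by decide))
end

section
/- For every vertex u of the Rook's 4×4 graph, the subgraph induced on the set of neighbours of u is isomorphic to the disjoint union of two triangles C₃ ⊔ C₃. -/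
theorem cycle3_adj (i j : Fin 3) : (cycle 3).Adj i j ↔ i ≠ j := by
  have h : ∀ i j : ZMod 3, (i ≠ j ∧ (i - j = 1 ∨ j - i = 1)) ↔ i ≠ j := by decide
  exact (SimpleGraph.fromRel_adj _ _ _).trans (h i j)

def nbr (u : Fin 4 × Fin 4) : Fin 3 ⊕ Fin 3 → Fin 4 × Fin 4
  | Sum.inl i => (u.1, u.2.succAbove i)
  | Sum.inr i => (u.1.succAbove i, u.2)

theorem nbr_mem (u : Fin 4 × Fin 4) (x : Fin 3 ⊕ Fin 3) : nbr u x ∈ rook.neighborSet u := by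
  rcases x with i | i
  · exact Or.inl ⟨rfl, (Fin.succAbove_ne u.2 i).symm⟩
  · exact Or.inr ⟨rfl, (Fin.succAbove_ne u.1 i).symm⟩

theorem nbr_bij (u : Fin 4 × Fin 4) : Function.Bijective
    (fun x => (⟨nbr u x, nbr_mem u x⟩ : rook.neighborSet u)) := by
  constructor
  · rintro (i | i) (j | j) h <;>
      simp [nbr, Fin.succAbove_ne, Fin.ne_succAbove] at h ⊢ <;> exact h
  · rintro ⟨⟨a, b⟩, (⟨h1, h2⟩ | ⟨h1, h2⟩)⟩
    · obtain ⟨i, hi⟩ := Fin.exists_succAbove_eq h2.symm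
      exact ⟨Sum.inl i, Subtype.ext (Prod.ext h1 hi)⟩
    · obtain ⟨i, hi⟩ := Fin.exists_succAbove_eq h2.symm
      exact ⟨Sum.inr i, Subtype.ext (Prod.ext hi h1)⟩

theorem nbr_adj (u : Fin 4 × Fin 4) (x y : Fin 3 ⊕ Fin 3) :
    rook.Adj (nbr u x) (nbr u y) ↔ (cycle 3 ⊕g cycle 3).Adj x y := by
  rcases x with i | i <;> rcases y with j | j
  · refine Iff.trans ?_ (cycle3_adj i j).symm
    simp [rook, nbr]
  · refine iff_of_false ?_ (fun h => Bool.false_ne_true h)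
    simp [rook, nbr, Fin.succAbove_ne, Fin.ne_succAbove]
  · refine iff_of_false ?_ (fun h => Bool.false_ne_true h)
    simp [rook, nbr, Fin.succAbove_ne, Fin.ne_succAbove]
  · refine Iff.trans ?_ (cycle3_adj i j).symm
    simp [rook, nbr]

/-- For every vertex `u` of the Rook's 4×4 graph, the subgraph induced on the neighbours of `u`
is isomorphic to the disjoint union of two triangles `C₃ ⊔ C₃`. -/
theorem stmt11 (u : Fin 4 × Fin 4) :
    Nonempty ((rook.induce (rook.neighborSet u)) ≃g (cycle 3 ⊕g cycle 3)) := by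
  refine ⟨SimpleGraph.Iso.symm ⟨Equiv.ofBijective _ (nbr_bij u), ?_⟩⟩
  intro x y
  exact nbr_adj u x y
end

section
/- For every vertex u of the Shrikhande graph, the subgraph induced on the set of neighbours of u is isomorphic to the cycle graph C₆. -/
/-- The six neighbour offsets in cyclic order. -/
def hexOff : ZMod 6 → ZMod 4 × ZMod 4 :=
  fun i => (![(1, 0), (1, 1), (0, 1), (3, 0), (3, 3), (0, 3)] : Fin 6 → ZMod 4 × ZMod 4) i

theorem hexOff_inj : ∀ i j : ZMod 6, hexOff i = hexOff j → i = j := by decide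

theorem hexOff_adj_zero : ∀ i : ZMod 6, shrikhandeRel 0 (hexOff i) := by decide

theorem hexOff_surj : ∀ w : ZMod 4 × ZMod 4, shrikhandeRel 0 w → ∃ i, hexOff i = w := by decide

theorem hexOff_adj : ∀ i j : ZMod 6,
    shrikhandeRel (hexOff i) (hexOff j) ↔ (i ≠ j ∧ (i - j = 1 ∨ j - i = 1)) := by decide

theorem shrikhandeRel_add (u v w : ZMod 4 × ZMod 4) :
    shrikhandeRel (u + v) (u + w) ↔ shrikhandeRel v w := by
  unfold shrikhandeRel
  rw [add_sub_add_left_eq_sub, ne_eq, add_right_inj]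

/-- For every vertex `u` of the Shrikhande graph, the subgraph induced on the neighbours of `u`
is isomorphic to the cycle graph `C₆`. -/
theorem stmt12 (u : ZMod 4 × ZMod 4) :
    Nonempty ((shrikhande.induce (shrikhande.neighborSet u)) ≃g cycle 6) := by
  have hn : ∀ w, shrikhandeRel u (u + w) ↔ shrikhandeRel 0 w := fun w => by
    have := shrikhandeRel_add u 0 w
    rwa [add_zero] at this
  let g : ZMod 6 → shrikhande.neighborSet u :=
    fun i => ⟨u + hexOff i, (hn _).2 (hexOff_adj_zero i)⟩
  have hg : Function.Bijective g := by
    constructor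
    · intro i j h
      exact hexOff_inj i j (add_left_cancel (congrArg Subtype.val h))
    · rintro ⟨w, hw⟩
      have hw' : shrikhandeRel u (u + (w - u)) := by
        rw [add_sub_cancel]; exact hw
      obtain ⟨i, hi⟩ := hexOff_surj _ ((hn _).1 hw')
      refine ⟨i, Subtype.ext ?_⟩
      change u + hexOff i = w
      rw [hi, add_sub_cancel]
  let e : cycle 6 ≃g shrikhande.induce (shrikhande.neighborSet u) :=
    { toEquiv := Equiv.ofBijective g hg
      map_rel_iff' := by
        intro i j
        change shrikhandeRel (u + hexOff i) (u + hexOff j) ↔ (cycle 6).Adj i j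
        rw [shrikhandeRel_add, hexOff_adj, cycle, SimpleGraph.fromRel_adj] }
  exact ⟨e.symm⟩
end

section
/- Let n ≥ 8 be divisible by 4, and let G be the simple graph on vertex set ZMod n whose edges are {i, i+1} for every i ∈ ZMod n, together with {i, i+2} for every i ∈ ZMod n that is congruent to 0 or 1 modulo 4. Then the graph distance in G between the vertices 0 and n/2 is at least n/4. -/
/-- The base graph of the CFI construction: the cycle on `ZMod n` with edges `{i, i + 1}`,
together with chords `{i, i + 2}` for every `i` congruent to `0` or `1` modulo `4`. -/
def baseGraph (n : ℕ) (h4 : 4 ∣ n) : SimpleGraph (ZMod n) :=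
  SimpleGraph.fromRel (fun i j =>
    j = i + 1 ∨
      ((ZMod.castHom h4 (ZMod 4) i = 0 ∨ ZMod.castHom h4 (ZMod 4) i = 1) ∧ j = i + 2))

theorem baseGraph_walk (n : ℕ) (h4 : 4 ∣ n) {v w : ZMod n} (p : (baseGraph n h4).Walk v w) :
    ∃ k : ℤ, |k| ≤ 2 * (p.length : ℤ) ∧ w = v + (k : ZMod n) := by
  induction p with
  | nil => exact ⟨0, by simp, by simp⟩
  | @cons a b c h p ih =>
    obtain ⟨k, hk, hw⟩ := ih
    have hs : ∃ d : ℤ, |d| ≤ 2 ∧ b = a + (d : ZMod n) := by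
      obtain ⟨-, (h | ⟨-, h⟩) | (h | ⟨-, h⟩)⟩ := h
      · exact ⟨1, by norm_num, by simp [h]⟩
      · exact ⟨2, by norm_num, by simp [h]⟩
      · exact ⟨-1, by norm_num, by simp [h]⟩
      · exact ⟨-2, by norm_num, by simp [h]⟩
    obtain ⟨d, hd, hb⟩ := hs
    refine ⟨d + k, ?_, by rw [hw, hb]; push_cast; ring⟩
    have := abs_add_le d k
    simp only [SimpleGraph.Walk.length_cons]
    push_cast
    linarith

theorem baseGraph_reach (n : ℕ) (hn : 8 ≤ n) (h4 : 4 ∣ n) (m : ℕ) :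
    (baseGraph n h4).Reachable 0 (m : ZMod n) := by
  haveI : Fact (1 < n) := ⟨by omega⟩
  induction m with
  | zero => simp
  | succ m ih =>
    refine ih.trans (SimpleGraph.Adj.reachable ⟨?_, Or.inl (Or.inl (by push_cast; rfl))⟩)
    push_cast
    simp

/-- For `n ≥ 8` divisible by 4, the graph distance between the vertices `0` and `n / 2` in the
base graph (the `n`-cycle plus chords `{i, i + 2}` for `i ≡ 0, 1 (mod 4)`) is at least `n / 4`. -/
theorem stmt18 (n : ℕ) (hn : 8 ≤ n) (h4 : 4 ∣ n) :
    n / 4 ≤ (baseGraph n h4).dist 0 ((n / 2 : ℕ) : ZMod n) := by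
  obtain ⟨p, hp⟩ := (baseGraph_reach n hn h4 (n / 2)).exists_walk_length_eq_dist
  obtain ⟨k, hk, hw⟩ := baseGraph_walk n h4 p
  rw [← hp]
  have h : (((n / 2 : ℕ) : ℤ) : ZMod n) = (k : ZMod n) := by
    rw [zero_add] at hw
    rw [← hw]; norm_cast
  rw [ZMod.intCast_eq_intCast_iff_dvd_sub] at h
  obtain ⟨c, hc⟩ := h
  obtain ⟨q, rfl⟩ := h4
  have e : 4 * q / 2 = 2 * q := by omega
  have e' : 4 * q / 4 = q := by omega
  rw [e] at hc
  rw [e']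
  push_cast at hc
  obtain ⟨h1, h2⟩ := abs_le.mp hk
  by_contra hlt
  have hlt : (p.length : ℤ) < q := by exact_mod_cast not_le.mp hlt
  rcases le_or_gt 0 c with h0 | h0
  · nlinarith
  · have : c ≤ -1 := by omega
    nlinarith
end
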